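/- arXiv:2111.02311 — 4 statements merged into one kernel-verified Lean document; each statement's English description precedes it below -/
import Mathlib

section
/- Let n ≥ 1 and μ > 0. Let M, A ∈ ℝ^{n×n} be symmetric with A positive semidefinite and xᵀM x ≥ μ|x|² for all x ∈ ℝⁿ (Euclidean norm), and let D ∈ ℝ^{n×n} satisfy xᵀD x ≥ 0 for every x ∈ ℝⁿ. Let S : [0,∞) → ℝⁿ be continuous and let X : [0,∞) → ℝⁿ be twice continuously differentiable with M·X''(t) + D·X'(t) + A·X(t) = S(t) for all t ≥ 0. Then the energy E(t) = X'(t)ᵀM X'(t) + X(t)ᵀA X(t) satisfies the stability estimate √(E(t)) ≤ √(E(0)) + μ^{−1/2} ∫₀ᵗ |S(s)| ds for all t ≥ 0. -/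
open Matrix

/-!
Testing the equation with `2 X'` and using the symmetry of `M` and `A` gives
`E' = 2 ⟪X', S⟫ - 2 ⟪X', D X'⟫ ≤ 2 ‖X'‖ ‖S‖ ≤ 2 √E · μ^{-1/2} ‖S‖`,
that is `(√E)' ≤ μ^{-1/2} ‖S‖` wherever `E > 0`. Since `√E` need not be differentiable at the zeros
of `E`, one integrates the bound for `√(E + δ²)` instead and lets `δ → 0`.
-/

open Set MeasureTheory WithLp
open scoped RealInnerProductSpace

section ScalarInequality

lemma sqrt_add_sq_le_sqrt_add {x y : ℝ} (hx : 0 ≤ x) (hy : 0 ≤ y) : √(x + y ^ 2) ≤ √x + y := by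
  refine Real.sqrt_le_iff.2 ⟨by positivity, ?_⟩
  have hcross : 0 ≤ 2 * √x * y := by positivity
  rw [add_sq, Real.sq_sqrt hx]
  linarith

variable {f f' g : ℝ → ℝ} {a b : ℝ}

lemma sqrt_add_sq_le_sqrt_add_sq_add_integral {δ : ℝ} (hδ : 0 < δ) (hab : a ≤ b)
    (hf_nonneg : ∀ t ∈ Icc a b, 0 ≤ f t) (hf_cont : ContinuousOn f (Icc a b))
    (hf_deriv : ∀ t ∈ Ioo a b, HasDerivWithinAt f (f' t) (Ioi t) t)
    (hg_nonneg : ∀ t ∈ Ioo a b, 0 ≤ g t) (hg_int : IntegrableOn g (Icc a b))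
    (hbound : ∀ t ∈ Ioo a b, f' t ≤ 2 * √(f t) * g t) :
    √(f b + δ ^ 2) ≤ √(f a + δ ^ 2) + ∫ s in a..b, g s := by
  have hpos : ∀ t ∈ Icc a b, 0 < f t + δ ^ 2 := fun t ht =>
    add_pos_of_nonneg_of_pos (hf_nonneg t ht) (pow_pos hδ 2)
  have hderiv : ∀ t ∈ Ioo a b, HasDerivWithinAt (fun s => √(f s + δ ^ 2))
      (f' t / (2 * √(f t + δ ^ 2))) (Ioi t) t := fun t ht =>
    ((hf_deriv t ht).add_const _).sqrt (hpos t (Ioo_subset_Icc_self ht)).ne'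
  have hderiv_le : ∀ t ∈ Ioo a b, f' t / (2 * √(f t + δ ^ 2)) ≤ g t := fun t ht => by
    have hsqrt_pos : 0 < √(f t + δ ^ 2) := Real.sqrt_pos.2 (hpos t (Ioo_subset_Icc_self ht))
    have hsqrt_le : √(f t) ≤ √(f t + δ ^ 2) := Real.sqrt_le_sqrt (by linarith [sq_nonneg δ])
    rw [div_le_iff₀ (by positivity)]
    calc f' t ≤ 2 * √(f t) * g t := hbound t ht
      _ ≤ 2 * √(f t + δ ^ 2) * g t := by
        have hgt : 0 ≤ g t := hg_nonneg t ht
        gcongr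
      _ = g t * (2 * √(f t + δ ^ 2)) := mul_comm _ _
  exact sub_le_iff_le_add'.1 <| intervalIntegral.sub_le_integral_of_hasDeriv_right_of_le hab
    (hf_cont.add continuousOn_const).sqrt hderiv hg_int hderiv_le

lemma sqrt_le_sqrt_add_integral (hab : a ≤ b)
    (hf_nonneg : ∀ t ∈ Icc a b, 0 ≤ f t) (hf_cont : ContinuousOn f (Icc a b))
    (hf_deriv : ∀ t ∈ Ioo a b, HasDerivWithinAt f (f' t) (Ioi t) t)
    (hg_nonneg : ∀ t ∈ Ioo a b, 0 ≤ g t) (hg_int : IntegrableOn g (Icc a b))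
    (hbound : ∀ t ∈ Ioo a b, f' t ≤ 2 * √(f t) * g t) :
    √(f b) ≤ √(f a) + ∫ s in a..b, g s := by
  refine le_of_forall_pos_le_add fun δ hδ => ?_
  calc √(f b) ≤ √(f b + δ ^ 2) := Real.sqrt_le_sqrt (by linarith [sq_nonneg δ])
    _ ≤ √(f a + δ ^ 2) + ∫ s in a..b, g s :=
      sqrt_add_sq_le_sqrt_add_sq_add_integral hδ hab hf_nonneg hf_cont hf_deriv hg_nonneg hg_int
        hbound
    _ ≤ √(f a) + δ + ∫ s in a..b, g s := by
      gcongr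
      exact sqrt_add_sq_le_sqrt_add (hf_nonneg a (left_mem_Icc.2 hab)) hδ.le
    _ = √(f a) + (∫ s in a..b, g s) + δ := add_right_comm _ _ _

end ScalarInequality

section InnerProductSpace

variable {V : Type*} [NormedAddCommGroup V] [InnerProductSpace ℝ V]

/-- The energy `⟪v, M v⟫ + ⟪x, A x⟫` of a second-order system with mass operator `M` and stiffness
operator `A` at position `x` and velocity `v`, i.e. twice the physical kinetic plus potential
energy. -/
noncomputable def mechanicalEnergy (M A : V →L[ℝ] V) (x v : V) : ℝ :=
  ⟪v, M v⟫ + ⟪x, A x⟫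

variable {M A : V →L[ℝ] V} {μ : ℝ}

lemma hasDerivWithinAt_inner_clm_self (hA : A.IsSymmetric) {u : ℝ → V} {u' : V} {s : Set ℝ}
    {t : ℝ} (hu : HasDerivWithinAt u u' s t) :
    HasDerivWithinAt (fun t => ⟪u t, A (u t)⟫) (2 * ⟪u', A (u t)⟫) s t := by
  refine (hu.inner ℝ (A.hasFDerivAt.comp_hasDerivWithinAt t hu)).congr_deriv ?_
  have hsymm : ⟪u t, A u'⟫ = ⟪u', A (u t)⟫ := (hA (u t) u').symm.trans (real_inner_comm _ _)
  rw [hsymm, two_mul, Function.comp_apply]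

lemma hasDerivWithinAt_mechanicalEnergy (hM : M.IsSymmetric) (hA : A.IsSymmetric)
    {x v : ℝ → V} {a : V} {s : Set ℝ} {t : ℝ} (hx : HasDerivWithinAt x (v t) s t)
    (hv : HasDerivWithinAt v a s t) :
    HasDerivWithinAt (fun t => mechanicalEnergy M A (x t) (v t))
      (2 * ⟪v t, M a + A (x t)⟫) s t := by
  refine ((hasDerivWithinAt_inner_clm_self hM hv).add
    (hasDerivWithinAt_inner_clm_self hA hx)).congr_deriv ?_
  have hsymm : ⟪a, M (v t)⟫ = ⟪v t, M a⟫ := (real_inner_comm _ _).trans (hM (v t) a)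
  rw [hsymm, inner_add_right, mul_add]

lemma mul_norm_sq_le_mechanicalEnergy (hM : ∀ v, μ * ‖v‖ ^ 2 ≤ ⟪v, M v⟫)
    (hA : ∀ x, 0 ≤ ⟪x, A x⟫) (x v : V) : μ * ‖v‖ ^ 2 ≤ mechanicalEnergy M A x v :=
  (hM v).trans (le_add_of_nonneg_right (hA x))

lemma norm_le_inv_sqrt_mul_sqrt_mechanicalEnergy (hμ : 0 < μ)
    (hM : ∀ v, μ * ‖v‖ ^ 2 ≤ ⟪v, M v⟫) (hA : ∀ x, 0 ≤ ⟪x, A x⟫) (x v : V) :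
    ‖v‖ ≤ (√μ)⁻¹ * √(mechanicalEnergy M A x v) := by
  rw [le_inv_mul_iff₀ (Real.sqrt_pos.2 hμ)]
  calc √μ * ‖v‖ = √(μ * ‖v‖ ^ 2) := by rw [Real.sqrt_mul hμ.le, Real.sqrt_sq (norm_nonneg v)]
    _ ≤ √(mechanicalEnergy M A x v) :=
      Real.sqrt_le_sqrt (mul_norm_sq_le_mechanicalEnergy hM hA x v)

lemma inner_sub_le_sqrt_mechanicalEnergy_mul (hμ : 0 < μ)
    (hM : ∀ v, μ * ‖v‖ ^ 2 ≤ ⟪v, M v⟫) (hA : ∀ x, 0 ≤ ⟪x, A x⟫) (x : V) {v d : V}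
    (hd : 0 ≤ ⟪v, d⟫) (f : V) :
    ⟪v, f - d⟫ ≤ √(mechanicalEnergy M A x v) * ((√μ)⁻¹ * ‖f‖) :=
  calc ⟪v, f - d⟫ ≤ ⟪v, f⟫ := by rw [inner_sub_right]; exact sub_le_self _ hd
    _ ≤ ‖v‖ * ‖f‖ := real_inner_le_norm v f
    _ ≤ (√μ)⁻¹ * √(mechanicalEnergy M A x v) * ‖f‖ := by
      gcongr
      exact norm_le_inv_sqrt_mul_sqrt_mechanicalEnergy hμ hM hA x v
    _ = √(mechanicalEnergy M A x v) * ((√μ)⁻¹ * ‖f‖) := by ring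

theorem semidiscrete_energy_stability_general (hμ : 0 < μ) (hM_symm : M.IsSymmetric)
    (hM : ∀ v, μ * ‖v‖ ^ 2 ≤ ⟪v, M v⟫) (hA : A.IsPositive) {D : V → V}
    (hD : ∀ v, 0 ≤ ⟪v, D v⟫) {S : ℝ → V} (hS : LocallyIntegrableOn S (Ici 0))
    {X X' X'' : ℝ → V} (hX : ∀ t ∈ Ici 0, HasDerivWithinAt X (X' t) (Ici 0) t)
    (hX' : ∀ t ∈ Ici 0, HasDerivWithinAt X' (X'' t) (Ici 0) t)
    (heq : ∀ t, 0 ≤ t → M (X'' t) + D (X' t) + A (X t) = S t) {t : ℝ} (ht : 0 ≤ t) :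
    √(mechanicalEnergy M A (X t) (X' t)) ≤
      √(mechanicalEnergy M A (X 0) (X' 0)) + (√μ)⁻¹ * ∫ s in (0 : ℝ)..t, ‖S s‖ := by
  have hA_nonneg : ∀ x, 0 ≤ ⟪x, A x⟫ := hA.inner_nonneg_right
  have hE_nonneg : ∀ x v, 0 ≤ mechanicalEnergy M A x v := fun x v =>
    (by positivity : 0 ≤ μ * ‖v‖ ^ 2).trans (mul_norm_sq_le_mechanicalEnergy hM hA_nonneg x v)
  have hE_deriv : ∀ s ∈ Ici 0, HasDerivWithinAt (fun s => mechanicalEnergy M A (X s) (X' s))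
      (2 * ⟪X' s, S s - D (X' s)⟫) (Ici 0) s := fun s hs => by
    have hbalance : S s - D (X' s) = M (X'' s) + A (X s) := by rw [← heq s hs]; abel
    rw [hbalance]
    exact hasDerivWithinAt_mechanicalEnergy hM_symm hA.isSymmetric (hX s hs) (hX' s hs)
  have hS_int : IntegrableOn (fun s => (√μ)⁻¹ * ‖S s‖) (Icc 0 t) :=
    (hS.integrableOn_compact_subset Icc_subset_Ici_self isCompact_Icc).norm.const_mul _
  rw [← intervalIntegral.integral_const_mul]
  refine sqrt_le_sqrt_add_integral ht (fun s _ => hE_nonneg (X s) (X' s))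
    (fun s hs => ((hE_deriv s hs.1).mono Icc_subset_Ici_self).continuousWithinAt)
    (fun s hs => (hE_deriv s hs.1.le).mono (Ioi_subset_Ici hs.1.le))
    (fun s _ => by positivity) hS_int fun s _ => ?_
  rw [mul_assoc]
  exact mul_le_mul_of_nonneg_left
    (inner_sub_le_sqrt_mechanicalEnergy_mul hμ hM hA_nonneg (X s) (hD (X' s)) (S s)) zero_le_two

end InnerProductSpace

section EuclideanSpace

variable {ι : Type*} [Fintype ι]

lemma norm_toLp_two_eq_sqrt_dotProduct (x : ι → ℝ) : ‖toLp 2 x‖ = √(x ⬝ᵥ x) := by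
  rw [norm_eq_sqrt_real_inner, EuclideanSpace.inner_toLp_toLp, star_trivial]

variable [DecidableEq ι] {M A : Matrix ι ι ℝ}

lemma isSymmetric_toEuclideanCLM (hM : M.IsSymm) :
    (toEuclideanCLM (𝕜 := ℝ) M).IsSymmetric := by
  rw [coe_toEuclideanCLM_eq_toEuclideanLin, isSymmetric_toEuclideanLin_iff, isHermitian_iff_isSymm]
  exact hM

lemma isPositive_toEuclideanCLM (hA : A.PosSemidef) : (toEuclideanCLM (𝕜 := ℝ) A).IsPositive := by
  rw [← ContinuousLinearMap.isPositive_toLinearMap_iff, coe_toEuclideanCLM_eq_toEuclideanLin,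
    isPositive_toEuclideanLin_iff]
  exact hA

lemma mul_norm_sq_le_inner_toEuclideanCLM {μ : ℝ}
    (hM : ∀ x : ι → ℝ, μ * (x ⬝ᵥ x) ≤ x ⬝ᵥ M *ᵥ x) (x : EuclideanSpace ℝ ι) :
    μ * ‖x‖ ^ 2 ≤ ⟪x, toEuclideanCLM (𝕜 := ℝ) M x⟫ := by
  rw [← real_inner_self_eq_norm_sq, EuclideanSpace.inner_eq_star_dotProduct, star_trivial,
    inner_toEuclideanCLM]
  exact hM (ofLp x)

lemma mechanicalEnergy_toEuclideanCLM (x v : ι → ℝ) :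
    mechanicalEnergy (toEuclideanCLM (𝕜 := ℝ) M) (toEuclideanCLM (𝕜 := ℝ) A) (toLp 2 x)
      (toLp 2 v) = v ⬝ᵥ M *ᵥ v + x ⬝ᵥ A *ᵥ x := by
  rw [mechanicalEnergy, inner_toEuclideanCLM, inner_toEuclideanCLM]

end EuclideanSpace

/-- Stability estimate for the forced semi-discrete system:
if `M, A` are symmetric, `A` positive semidefinite, `xᵀMx ≥ μ|x|²` (Euclidean
norm, `μ > 0`), `xᵀDx ≥ 0`, `S` continuous and `M X'' + D X' + A X = S` on
`[0,∞)`, then the energy `E(t) = X'(t)ᵀ M X'(t) + X(t)ᵀ A X(t)` satisfies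
`√E(t) ≤ √E(0) + μ^{−1/2} ∫₀ᵗ |S(s)| ds` for all `t ≥ 0`. -/
theorem semidiscrete_energy_stability
    (n : ℕ) (hn : 1 ≤ n) (μ : ℝ) (hμ : 0 < μ)
    (M A D : Matrix (Fin n) (Fin n) ℝ)
    (hMsymm : M.IsSymm) (hAsymm : A.IsSymm) (hA : A.PosSemidef)
    (hM : ∀ x : Fin n → ℝ, μ * (x ⬝ᵥ x) ≤ x ⬝ᵥ M.mulVec x)
    (hD : ∀ x : Fin n → ℝ, 0 ≤ x ⬝ᵥ D.mulVec x)
    (S : ℝ → Fin n → ℝ) (hS : ContinuousOn S (Set.Ici (0 : ℝ)))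
    (X X' X'' : ℝ → Fin n → ℝ)
    (hX : ∀ t ∈ Set.Ici (0 : ℝ), HasDerivWithinAt X (X' t) (Set.Ici 0) t)
    (hX' : ∀ t ∈ Set.Ici (0 : ℝ), HasDerivWithinAt X' (X'' t) (Set.Ici 0) t)
    (hX'' : ContinuousOn X'' (Set.Ici (0 : ℝ)))
    (heq : ∀ t, 0 ≤ t →
      M.mulVec (X'' t) + D.mulVec (X' t) + A.mulVec (X t) = S t) :
    ∀ t, 0 ≤ t →
      Real.sqrt (X' t ⬝ᵥ M.mulVec (X' t) + X t ⬝ᵥ A.mulVec (X t))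
        ≤ Real.sqrt (X' 0 ⬝ᵥ M.mulVec (X' 0) + X 0 ⬝ᵥ A.mulVec (X 0))
          + (Real.sqrt μ)⁻¹ * ∫ s in (0 : ℝ)..t, Real.sqrt (S s ⬝ᵥ S s) := by
  intro t ht
  simp only [← norm_toLp_two_eq_sqrt_dotProduct, ← mechanicalEnergy_toEuclideanCLM]
  exact semidiscrete_energy_stability_general hμ (isSymmetric_toEuclideanCLM hMsymm)
    (mul_norm_sq_le_inner_toEuclideanCLM hM) (isPositive_toEuclideanCLM hA)
    (D := toEuclideanCLM (𝕜 := ℝ) D)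
    (fun v => (hD v).trans_eq (inner_toEuclideanCLM D v v).symm)
    (((PiLp.continuous_toLp 2 _).comp_continuousOn hS).locallyIntegrableOn measurableSet_Ici)
    (fun s hs => (PiLp.hasFDerivAt_toLp (𝕜 := ℝ) 2 (X s)).comp_hasDerivWithinAt s (hX s hs))
    (fun s hs => (PiLp.hasFDerivAt_toLp (𝕜 := ℝ) 2 (X' s)).comp_hasDerivWithinAt s (hX' s hs))
    (fun s hs => congrArg (toLp 2) (heq s hs)) ht
end

section
/- Let T > 0, let E : [0,T] → ℝ be differentiable with E(t) ≥ 0 for all t, and let g : [0,T] → ℝ be continuous with g(t) ≥ 0 for all t. If E'(t) ≤ 2 g(t) √(E(t)) for all t ∈ [0,T], then √(E(t)) ≤ √(E(0)) + ∫₀ᵗ g(s) ds for all t ∈ [0,T]. -/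
/-!
Where `E > 0`, dividing `E' ≤ 2 g √E` by `2 √E` gives `(√E)' ≤ g`, which integrates to the claim.
Zeros of `E`, where `√E` need not be differentiable, are avoided by running the argument for
`√(E + ε)` with `ε > 0`, whose derivative is still at most `g`, and letting `ε → 0`.
-/

open Filter MeasureTheory Set Topology

theorem div_two_mul_sqrt_add_le {e e' g ε : ℝ} (hg : 0 ≤ g) (hε : 0 ≤ ε)
    (h : e' ≤ 2 * g * √e) : e' / (2 * √(e + ε)) ≤ g := by
  refine div_le_of_le_mul₀ (by positivity) hg ?_
  calc e' ≤ 2 * g * √e := h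
    _ ≤ 2 * g * √(e + ε) := by gcongr; exact le_add_of_nonneg_right hε
    _ = g * (2 * √(e + ε)) := by ring

theorem sqrt_add_sub_sqrt_add_le_integral {a b ε : ℝ} {E E' g : ℝ → ℝ} (hab : a ≤ b) (hε : 0 < ε)
    (hE : ContinuousOn E (Icc a b))
    (hderiv : ∀ x ∈ Ioo a b, HasDerivWithinAt E (E' x) (Ioi x) x)
    (hE_nonneg : ∀ x ∈ Ioo a b, 0 ≤ E x)
    (hg : IntegrableOn g (Icc a b)) (hg_nonneg : ∀ x ∈ Ioo a b, 0 ≤ g x)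
    (hE' : ∀ x ∈ Ioo a b, E' x ≤ 2 * g x * √(E x)) :
    √(E b + ε) - √(E a + ε) ≤ ∫ s in a..b, g s := by
  have hsqrt_deriv : ∀ x ∈ Ioo a b,
      HasDerivWithinAt (fun y ↦ √(E y + ε)) (E' x / (2 * √(E x + ε))) (Ioi x) x := fun x hx ↦
    ((hderiv x hx).add_const ε).sqrt (add_pos_of_nonneg_of_pos (hE_nonneg x hx) hε).ne'
  exact intervalIntegral.sub_le_integral_of_hasDeriv_right_of_le hab
    (hE.add continuousOn_const).sqrt hsqrt_deriv hg
    fun x hx ↦ div_two_mul_sqrt_add_le (hg_nonneg x hx) hε.le (hE' x hx)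

theorem sqrt_gronwall_general {a b : ℝ} {E E' g : ℝ → ℝ}
    (hE : ContinuousOn E (Icc a b))
    (hderiv : ∀ x ∈ Ioo a b, HasDerivWithinAt E (E' x) (Ioi x) x)
    (hE_nonneg : ∀ x ∈ Ioo a b, 0 ≤ E x)
    (hg : IntegrableOn g (Icc a b)) (hg_nonneg : ∀ x ∈ Ioo a b, 0 ≤ g x)
    (hE' : ∀ x ∈ Ioo a b, E' x ≤ 2 * g x * √(E x)) :
    ∀ t ∈ Icc a b, √(E t) ≤ √(E a) + ∫ s in a..t, g s := by
  intro t ht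
  have hIcc : Icc a t ⊆ Icc a b := Icc_subset_Icc_right ht.2
  have hIoo : Ioo a t ⊆ Ioo a b := Ioo_subset_Ioo_right ht.2
  have hregularized : ∀ ε > 0, √(E t + ε) - √(E a + ε) ≤ ∫ s in a..t, g s := fun ε hε ↦
    sqrt_add_sub_sqrt_add_le_integral ht.1 hε (hE.mono hIcc) (fun x hx ↦ hderiv x (hIoo hx))
      (fun x hx ↦ hE_nonneg x (hIoo hx)) (hg.mono_set hIcc) (fun x hx ↦ hg_nonneg x (hIoo hx))
      fun x hx ↦ hE' x (hIoo hx)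
  have hlim : Tendsto (fun ε ↦ √(E t + ε) - √(E a + ε)) (𝓝[>] 0) (𝓝 (√(E t) - √(E a))) := by
    have hcont : Continuous fun ε ↦ √(E t + ε) - √(E a + ε) := by fun_prop
    simpa only [add_zero] using (hcont.tendsto 0).mono_left nhdsWithin_le_nhds
  exact sub_le_iff_le_add'.mp <|
    le_of_tendsto hlim (eventually_mem_nhdsWithin.mono hregularized)

/-- Square-root Gronwall lemma: if `E ≥ 0` is differentiable
on `[0,T]`, `g ≥ 0` is continuous on `[0,T]`, and `E' ≤ 2 g √E` on `[0,T]`,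
then `√E(t) ≤ √E(0) + ∫₀ᵗ g(s) ds` for all `t ∈ [0,T]`. -/
theorem sqrt_gronwall
    (T : ℝ) (hT : 0 < T)
    (E E' g : ℝ → ℝ)
    (hE : ∀ t ∈ Set.Icc (0 : ℝ) T, HasDerivWithinAt E (E' t) (Set.Icc 0 T) t)
    (hEpos : ∀ t ∈ Set.Icc (0 : ℝ) T, 0 ≤ E t)
    (hg : ContinuousOn g (Set.Icc 0 T))
    (hgpos : ∀ t ∈ Set.Icc (0 : ℝ) T, 0 ≤ g t)
    (hE' : ∀ t ∈ Set.Icc (0 : ℝ) T, E' t ≤ 2 * g t * Real.sqrt (E t)) :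
    ∀ t ∈ Set.Icc (0 : ℝ) T,
      Real.sqrt (E t) ≤ Real.sqrt (E 0) + ∫ s in (0 : ℝ)..t, g s := by
  have hIoo {x : ℝ} (hx : x ∈ Ioo 0 T) : x ∈ Icc 0 T := Ioo_subset_Icc_self hx
  exact sqrt_gronwall_general (HasDerivWithinAt.continuousOn hE)
    (fun x hx ↦ (hE x (hIoo hx)).mono_of_mem_nhdsWithin (Icc_mem_nhdsGT_of_mem ⟨hx.1.le, hx.2⟩))
    (fun x hx ↦ hEpos x (hIoo hx)) hg.integrableOn_Icc (fun x hx ↦ hgpos x (hIoo hx))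
    fun x hx ↦ hE' x (hIoo hx)
end

section
/- Let n ≥ 1, let M, A ∈ ℝ^{n×n} be symmetric matrices with M invertible, and let Δt > 0. Let (X^k)_{k≥0}, (Z^k)_{k≥0} be sequences in ℝⁿ satisfying the Newmark scheme with parameters γ_N = 1/2, β_N = 1/4 applied to the undamped unforced system M·X'' + A·X = 0, i.e. with L^k = −M⁻¹A X^k: X^{k+1} = X^k + Δt·Z^k + (Δt²/4)(L^{k+1} + L^k) and Z^{k+1} = Z^k + (Δt/2)(L^{k+1} + L^k) for all k ≥ 0. Then the discrete energy E^k = (Z^k)ᵀM Z^k + (X^k)ᵀA X^k is exactly conserved: E^{k+1} = E^k for every k ≥ 0 and every choice of Δt > 0 (unconditional stability when M and A are positive definite). -/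
/-!
Over one average-acceleration step both variables obey the trapezoidal rule: with `τ = Δt / 2`,
`x' - x = τ (z' + z)` and `z' - z = τ (l' + l)`. For a symmetric bilinear form `b` one has
`b u u - b v v = b (u + v) (u - v)`, so the kinetic energy changes by `τ m (z' + z) (l' + l)` and
the potential energy by `a (x' + x) (x' - x) = τ a (z' + z) (x' + x)`. Testing the equation of
motion `m v l = -a v x` against `v = z' + z` shows that the two changes cancel.
-/

open Matrix

open LinearMap (BilinForm)

namespace Newmark

section BilinForm

variable {R V : Type*} [CommRing R] [AddCommGroup V] [Module R V]

/-- The discrete energy (up to the usual factor `1 / 2`) of a state with position `x` and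
velocity `z`, for the mass form `m` and the stiffness form `a`; this is the quantity the scheme
conserves. -/
def discreteEnergy (m a : BilinForm R V) (x z : V) : R :=
  m z z + a x x

theorem apply_self_sub_apply_self {b : BilinForm R V} (hb : b.IsSymm) (u v : V) :
    b u u - b v v = b (u + v) (u - v) := by
  simp only [map_add, map_sub, LinearMap.add_apply, hb.eq v u]
  ring

theorem position_sub_eq_smul_velocity_add {τ : R} {x x' z z' l l' : V}
    (hx : x' = x + (2 * τ) • z + τ ^ 2 • (l' + l)) (hz : z' = z + τ • (l' + l)) :
    x' - x = τ • (z' + z) := by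
  rw [hx, hz]
  module

theorem discreteEnergy_eq_of_trapezoidal {m a : BilinForm R V} (hm : m.IsSymm) (ha : a.IsSymm)
    {τ : R} {x x' z z' l l' : V} (hl : ∀ v, m v l = -a v x) (hl' : ∀ v, m v l' = -a v x')
    (hx : x' - x = τ • (z' + z)) (hz : z' - z = τ • (l' + l)) :
    discreteEnergy m a x' z' = discreteEnergy m a x z := by
  have kinetic : m z' z' - m z z = -(τ * a (z' + z) (x' + x)) := by
    rw [apply_self_sub_apply_self hm, hz, map_smul, map_add, hl, hl', ← neg_add, ← map_add,
      smul_neg, smul_eq_mul]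
  have potential : a x' x' - a x x = τ * a (z' + z) (x' + x) := by
    rw [apply_self_sub_apply_self ha, hx, map_smul, ha.eq, smul_eq_mul]
  unfold discreteEnergy
  linear_combination kinetic + potential

end BilinForm

theorem toBilin'_inv_mulVec {R ι : Type*} [CommRing R] [Fintype ι] [DecidableEq ι]
    {M : Matrix ι ι R} (hM : IsUnit M.det) (v w : ι → R) :
    M.toBilin' v (M⁻¹ *ᵥ w) = v ⬝ᵥ w := by
  rw [toBilin'_apply', mulVec_mulVec, mul_nonsing_inv M hM, one_mulVec]

end Newmark

open Newmark

/-- Here `τ` is half the time step, and the accelerations `l` and `l'` satisfy the equation of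
motion in weak form. -/
theorem newmark_average_acceleration_energy_conservation_general
    {R V : Type*} [CommRing R] [AddCommGroup V] [Module R V]
    {m a : BilinForm R V} (hm : m.IsSymm) (ha : a.IsSymm) (τ : R) {x x' z z' l l' : V}
    (hl : ∀ v, m v l = -a v x) (hl' : ∀ v, m v l' = -a v x')
    (hx : x' = x + (2 * τ) • z + τ ^ 2 • (l' + l)) (hz : z' = z + τ • (l' + l)) :
    discreteEnergy m a x' z' = discreteEnergy m a x z :=
  discreteEnergy_eq_of_trapezoidal hm ha hl hl' (position_sub_eq_smul_velocity_add hx hz)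
    (sub_eq_of_eq_add' hz)

/-- Exact discrete energy conservation of the Newmark scheme
with `γ_N = 1/2`, `β_N = 1/4` applied to the undamped unforced system
`M X'' + A X = 0` (so `L^k = −M⁻¹ A X^k`): the discrete energy
`E^k = (Z^k)ᵀ M Z^k + (X^k)ᵀ A X^k` satisfies `E^{k+1} = E^k` for every `k`
and every `Δt > 0`. -/
theorem newmark_average_acceleration_energy_conservation
    (n : ℕ) (hn : 1 ≤ n)
    (M A : Matrix (Fin n) (Fin n) ℝ)
    (hM : M.IsSymm) (hA : A.IsSymm) (hMinv : IsUnit M.det)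
    (Δt : ℝ) (hΔt : 0 < Δt)
    (X Z L : ℕ → Fin n → ℝ)
    (hL : ∀ k, L k = -(M⁻¹.mulVec (A.mulVec (X k))))
    (hX : ∀ k, X (k + 1) = X k + Δt • Z k + (Δt ^ 2 / 4) • (L (k + 1) + L k))
    (hZ : ∀ k, Z (k + 1) = Z k + (Δt / 2) • (L (k + 1) + L k)) :
    ∀ k, Z (k + 1) ⬝ᵥ M.mulVec (Z (k + 1)) + X (k + 1) ⬝ᵥ A.mulVec (X (k + 1))
      = Z k ⬝ᵥ M.mulVec (Z k) + X k ⬝ᵥ A.mulVec (X k) := by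
  intro k
  have motion (j : ℕ) (v : Fin n → ℝ) : M.toBilin' v (L j) = -A.toBilin' v (X j) := by
    rw [hL, map_neg, toBilin'_inv_mulVec hMinv, toBilin'_apply']
  have position : X (k + 1) = X k + (2 * (Δt / 2)) • Z k + (Δt / 2) ^ 2 • (L (k + 1) + L k) := by
    rw [hX]
    module
  simpa only [discreteEnergy, toBilin'_apply'] using
    newmark_average_acceleration_energy_conservation_general
      (isSymm_toBilin'_iff_isSymm.mpr hM) (isSymm_toBilin'_iff_isSymm.mpr hA)
      (Δt / 2) (motion k) (motion (k + 1)) position (hZ k)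
end

section
/- Let n₁, n₂ ≥ 1, n = n₁ + n₂, and T > 0. Write vectors X ∈ ℝⁿ as X = (X₁, X₂) with X₁ ∈ ℝ^{n₁}, X₂ ∈ ℝ^{n₂}. Let M, A, D ∈ ℝ^{n×n} with M symmetric positive definite and A symmetric positive semidefinite; let M₁ ∈ ℝ^{n₁×n₁} and B ∈ ℝ^{n₂×n₂} be symmetric positive definite; and assume XᵀM X ≥ 2·X₁ᵀM₁X₁ and XᵀD X ≥ X₂ᵀB X₂ for all X = (X₁,X₂) ∈ ℝⁿ. Let F : [0,T] → ℝ^{n₁} and G : [0,T] → ℝ^{n₂} be continuous, set S = (F, G), and let X : [0,T] → ℝⁿ be twice continuously differentiable with M·X''(t) + D·X'(t) + A·X(t) = S(t) for all t ∈ [0,T]. Then, with E(t) = X'(t)ᵀM X'(t) + X(t)ᵀA X(t), the following stability estimate holds: max_{t ∈ [0,T]} [ E(t) + ∫₀ᵗ X'(s)ᵀD X'(s) ds ] ≤ 2·[ E(0) + T·∫₀ᵀ F(s)ᵀM₁⁻¹F(s) ds + ∫₀ᵀ G(s)ᵀB⁻¹G(s) ds ]. -/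
open Matrix

/-!
Testing the equation with `X'` gives `E' = 2 X'ᵀS - 2 X'ᵀDX'`, because `M` and `A` are symmetric.
Young's inequality, weighted by `T` on the first block and by `1` on the second, bounds `2 X'ᵀS` by
`T FᵀM₁⁻¹F + GᵀB⁻¹G + E / (2T) + X'ᵀDX'`: the factor `2` in `2 X₁ᵀM₁X₁ ≤ XᵀMX` is what produces
`E / (2T)` rather than `E / T`. Integrating, and bounding `E` by its maximum over `[0, T]`, the last
term contributes at most half of that maximum and is absorbed on the left. No exponential factor,
as in Grönwall's inequality, appears.
-/

open MeasureTheory Set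

section AbsorbedGrowth

variable {a b c : ℝ} {e e' d r : ℝ → ℝ}

theorem add_integral_le_add_integral_of_hasDerivWithinAt (hab : a ≤ b)
    (he : ContinuousOn e (Icc a b))
    (he' : ∀ t ∈ Ioo a b, HasDerivWithinAt e (e' t) (Ioi t) t)
    (hd : IntervalIntegrable d volume a b) (hr : IntervalIntegrable r volume a b)
    (hle : ∀ t ∈ Ioo a b, e' t + d t ≤ r t) :
    e b + ∫ s in a..b, d s ≤ e a + ∫ s in a..b, r s := by
  have hint : IntegrableOn (fun s => r s - d s) (Icc a b) :=
    (intervalIntegrable_iff_integrableOn_Icc_of_le hab).1 (hr.sub hd)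
  have h := intervalIntegral.sub_le_integral_of_hasDeriv_right_of_le hab he he' hint
    fun t ht => le_sub_iff_add_le.2 (hle t ht)
  rw [intervalIntegral.integral_sub hr hd] at h
  linarith

theorem add_integral_le_of_hasDerivWithinAt_of_le_const (hc : 0 ≤ c) (he : ContinuousOn e (Icc a b))
    (he' : ∀ t ∈ Ioo a b, HasDerivWithinAt e (e' t) (Ioi t) t)
    (hd : IntervalIntegrable d volume a b) (hr : IntervalIntegrable r volume a b)
    (hr₀ : ∀ t ∈ Icc a b, 0 ≤ r t)
    (hle : ∀ t ∈ Ioo a b, e' t + d t ≤ r t + c * e t)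
    {m : ℝ} (hm : 0 ≤ m) (hem : ∀ t ∈ Icc a b, e t ≤ m) {t : ℝ} (ht : t ∈ Icc a b) :
    e t + ∫ s in a..t, d s ≤ e a + (∫ s in a..b, r s) + c * (b - a) * m := by
  have hab : a ≤ b := ht.1.trans ht.2
  have hsub : uIcc a t ⊆ uIcc a b := by
    rw [uIcc_of_le ht.1, uIcc_of_le hab]
    exact Icc_subset_Icc_right ht.2
  have hIoo : Ioo a t ⊆ Ioo a b := Ioo_subset_Ioo_right ht.2
  have hrm : IntervalIntegrable (fun s => r s + c * m) volume a b :=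
    hr.add intervalIntegrable_const
  have hrm₀ : ∀ s ∈ Icc a b, 0 ≤ r s + c * m := fun s hs =>
    add_nonneg (hr₀ s hs) (mul_nonneg hc hm)
  calc e t + ∫ s in a..t, d s
      ≤ e a + ∫ s in a..t, (r s + c * m) :=
        add_integral_le_add_integral_of_hasDerivWithinAt ht.1
          (he.mono (Icc_subset_Icc_right ht.2)) (fun s hs => he' s (hIoo hs))
          (hd.mono_set hsub) (hrm.mono_set hsub) fun s hs =>
            (hle s (hIoo hs)).trans <| by gcongr; exact hem s (Ioo_subset_Icc_self (hIoo hs))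
    _ ≤ e a + ∫ s in a..b, (r s + c * m) := by
        gcongr
        refine intervalIntegral.integral_mono_interval le_rfl ht.1 ht.2 ?_ hrm
        exact ae_restrict_of_forall_mem measurableSet_Ioc fun s hs =>
          hrm₀ s (Ioc_subset_Icc_self hs)
    _ = e a + (∫ s in a..b, r s) + c * (b - a) * m := by
        rw [intervalIntegral.integral_add hr intervalIntegrable_const,
          intervalIntegral.integral_const, smul_eq_mul]
        ring

theorem one_sub_mul_add_integral_le_of_hasDerivWithinAt (hc : 0 ≤ c) (hcab : c * (b - a) ≤ 1)
    (he : ContinuousOn e (Icc a b)) (he₀ : ∀ t ∈ Icc a b, 0 ≤ e t)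
    (he' : ∀ t ∈ Ioo a b, HasDerivWithinAt e (e' t) (Ioi t) t)
    (hd : IntervalIntegrable d volume a b) (hd₀ : ∀ t ∈ Icc a b, 0 ≤ d t)
    (hr : IntervalIntegrable r volume a b) (hr₀ : ∀ t ∈ Icc a b, 0 ≤ r t)
    (hle : ∀ t ∈ Ioo a b, e' t + d t ≤ r t + c * e t) {t : ℝ} (ht : t ∈ Icc a b) :
    (1 - c * (b - a)) * (e t + ∫ s in a..t, d s) ≤ e a + ∫ s in a..b, r s := by
  have hab : a ≤ b := ht.1.trans ht.2
  obtain ⟨t₀, ht₀, hmax⟩ := isCompact_Icc.exists_isMaxOn (nonempty_Icc.2 hab) he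
  have hbound {s : ℝ} (hs : s ∈ Icc a b) :
      e s + ∫ u in a..s, d u ≤ e a + (∫ u in a..b, r u) + c * (b - a) * e t₀ :=
    add_integral_le_of_hasDerivWithinAt_of_le_const hc he he' hd hr hr₀ hle (he₀ t₀ ht₀)
      (fun _ hu => hmax hu) hs
  have habsorb : (1 - c * (b - a)) * e t₀ ≤ e a + ∫ u in a..b, r u := by
    have hd_int : 0 ≤ ∫ u in a..t₀, d u :=
      intervalIntegral.integral_nonneg ht₀.1 fun u hu => hd₀ u ⟨hu.1, hu.2.trans ht₀.2⟩
    linarith [hbound ht₀]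
  have hcab₀ : 0 ≤ c * (b - a) := mul_nonneg hc (sub_nonneg.2 hab)
  calc (1 - c * (b - a)) * (e t + ∫ s in a..t, d s)
      ≤ (1 - c * (b - a)) * (e a + (∫ s in a..b, r s) + c * (b - a) * e t₀) :=
        mul_le_mul_of_nonneg_left (hbound ht) (sub_nonneg.2 hcab)
    _ = (1 - c * (b - a)) * (e a + ∫ s in a..b, r s)
          + c * (b - a) * ((1 - c * (b - a)) * e t₀) := by ring
    _ ≤ (1 - c * (b - a)) * (e a + ∫ s in a..b, r s)
          + c * (b - a) * (e a + ∫ s in a..b, r s) := by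
        linarith [mul_le_mul_of_nonneg_left habsorb hcab₀]
    _ = e a + ∫ s in a..b, r s := by ring

end AbsorbedGrowth

section QuadraticForm

variable {ι : Type*} [Fintype ι] {P : Matrix ι ι ℝ}

theorem dotProduct_mulVec_self_nonneg (hP : P.PosSemidef) (x : ι → ℝ) : 0 ≤ x ⬝ᵥ P *ᵥ x := by
  simpa only [star_trivial] using hP.dotProduct_mulVec_nonneg x

theorem dotProduct_mulVec_comm_of_isHermitian (hP : P.IsHermitian) (x y : ι → ℝ) :
    x ⬝ᵥ P *ᵥ y = y ⬝ᵥ P *ᵥ x := by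
  rw [← dotProduct_transpose_mulVec, ← conjTranspose_eq_transpose_of_trivial, hP.eq]

theorem two_mul_dotProduct_mulVec_le (hP : P.PosSemidef) (x y : ι → ℝ) :
    2 * (x ⬝ᵥ P *ᵥ y) ≤ x ⬝ᵥ P *ᵥ x + y ⬝ᵥ P *ᵥ y := by
  have h := dotProduct_mulVec_self_nonneg hP (x - y)
  rw [mulVec_sub, dotProduct_sub, sub_dotProduct, sub_dotProduct,
    dotProduct_mulVec_comm_of_isHermitian hP.isHermitian y x] at h
  linarith

theorem two_mul_dotProduct_le_of_posDef [DecidableEq ι] (hP : P.PosDef) {c : ℝ} (hc : 0 < c)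
    (x f : ι → ℝ) :
    2 * (x ⬝ᵥ f) ≤ c * (f ⬝ᵥ P⁻¹ *ᵥ f) + c⁻¹ * (x ⬝ᵥ P *ᵥ x) := by
  have hPf : P *ᵥ P⁻¹ *ᵥ f = f := by
    rw [mulVec_mulVec, mul_nonsing_inv _ ((isUnit_iff_isUnit_det P).1 hP.isUnit), one_mulVec]
  have h := two_mul_dotProduct_mulVec_le hP.posSemidef x (c • P⁻¹ *ᵥ f)
  simp only [mulVec_smul, hPf, dotProduct_smul, smul_dotProduct, smul_eq_mul,
    dotProduct_comm (P⁻¹ *ᵥ f) f] at h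
  calc 2 * (x ⬝ᵥ f) = c⁻¹ * (2 * (c * (x ⬝ᵥ f))) := by field_simp
    _ ≤ c⁻¹ * (x ⬝ᵥ P *ᵥ x + c * (c * (f ⬝ᵥ P⁻¹ *ᵥ f))) := by gcongr
    _ = c * (f ⬝ᵥ P⁻¹ *ᵥ f) + c⁻¹ * (x ⬝ᵥ P *ᵥ x) := by field_simp; ring

theorem continuous_dotProduct_mulVec_self (P : Matrix ι ι ℝ) :
    Continuous fun x : ι → ℝ => x ⬝ᵥ P *ᵥ x :=
  continuous_id.dotProduct (continuous_const.matrix_mulVec continuous_id)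

theorem intervalIntegrable_dotProduct_mulVec_self (P : Matrix ι ι ℝ) {x : ℝ → ι → ℝ} {a b : ℝ}
    (hab : a ≤ b) (hx : ContinuousOn x (Icc a b)) :
    IntervalIntegrable (fun s => x s ⬝ᵥ P *ᵥ x s) volume a b :=
  ((continuous_dotProduct_mulVec_self P).comp_continuousOn hx).intervalIntegrable_of_Icc hab

theorem hasDerivWithinAt_dotProduct_mulVec_self (hP : P.IsHermitian) {x : ℝ → ι → ℝ} {x' : ι → ℝ}
    {s : Set ℝ} {t : ℝ} (hx : HasDerivWithinAt x x' s t) :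
    HasDerivWithinAt (fun u => x u ⬝ᵥ P *ᵥ x u) (2 * (x' ⬝ᵥ P *ᵥ x t)) s t := by
  classical
  have h := (toLinearMap₂' ℝ P : (ι → ℝ) →ₗ[ℝ] (ι → ℝ) →ₗ[ℝ] ℝ)
    |>.toContinuousBilinearMap.hasDerivWithinAt_of_bilinear hx hx
  simpa only [LinearMap.toContinuousBilinearMap_apply, toLinearMap₂'_apply',
    dotProduct_mulVec_comm_of_isHermitian hP (x t) x', ← two_mul] using h

end QuadraticForm

section Energy

variable {ι : Type*} [Fintype ι] {M A D : Matrix ι ι ℝ}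

/-- Twice the mechanical energy of a state with displacement `x` and velocity `v`, for the mass
matrix `M` and the stiffness matrix `A`. The paper's `E(t)` is `energy M A (X t) (X' t)`. -/
def energy (M A : Matrix ι ι ℝ) (x v : ι → ℝ) : ℝ :=
  v ⬝ᵥ M *ᵥ v + x ⬝ᵥ A *ᵥ x

theorem hasDerivWithinAt_energy (hM : M.IsHermitian) (hA : A.IsHermitian) {X X' : ℝ → ι → ℝ}
    {X'' S : ι → ℝ} {s : Set ℝ} {t : ℝ} (hX : HasDerivWithinAt X (X' t) s t)
    (hX' : HasDerivWithinAt X' X'' s t) (heq : M *ᵥ X'' + D *ᵥ X' t + A *ᵥ X t = S) :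
    HasDerivWithinAt (fun u => energy M A (X u) (X' u))
      (2 * (X' t ⬝ᵥ S) - 2 * (X' t ⬝ᵥ D *ᵥ X' t)) s t := by
  refine ((hasDerivWithinAt_dotProduct_mulVec_self hM hX').add
    (hasDerivWithinAt_dotProduct_mulVec_self hA hX)).congr_deriv ?_
  rw [← heq, dotProduct_add, dotProduct_add,
    dotProduct_mulVec_comm_of_isHermitian hM X'' (X' t)]
  ring

end Energy

section Block

variable {ι₁ ι₂ : Type*} [Fintype ι₁] [Fintype ι₂] [DecidableEq ι₁] [DecidableEq ι₂]
  {M A D : Matrix (ι₁ ⊕ ι₂) (ι₁ ⊕ ι₂) ℝ} {M₁ : Matrix ι₁ ι₁ ℝ} {B : Matrix ι₂ ι₂ ℝ}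

theorem two_mul_dotProduct_sumElim_le (hM₁ : M₁.PosDef) (hB : B.PosDef) {c : ℝ} (hc : 0 < c)
    {v : ι₁ ⊕ ι₂ → ℝ}
    (hMdom : 2 * ((v ∘ Sum.inl) ⬝ᵥ M₁ *ᵥ (v ∘ Sum.inl)) ≤ v ⬝ᵥ M *ᵥ v)
    (hDdom : (v ∘ Sum.inr) ⬝ᵥ B *ᵥ (v ∘ Sum.inr) ≤ v ⬝ᵥ D *ᵥ v) (f : ι₁ → ℝ) (g : ι₂ → ℝ) :
    2 * (v ⬝ᵥ Sum.elim f g) ≤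
      c * (f ⬝ᵥ M₁⁻¹ *ᵥ f) + g ⬝ᵥ B⁻¹ *ᵥ g + (2 * c)⁻¹ * (v ⬝ᵥ M *ᵥ v) + v ⬝ᵥ D *ᵥ v := by
  have hsplit : v ⬝ᵥ Sum.elim f g = (v ∘ Sum.inl) ⬝ᵥ f + (v ∘ Sum.inr) ⬝ᵥ g := by
    rw [← sumElim_dotProduct_sumElim, Sum.elim_comp_inl_inr]
  have hf := two_mul_dotProduct_le_of_posDef hM₁ hc (v ∘ Sum.inl) f
  have hg := two_mul_dotProduct_le_of_posDef hB one_pos (v ∘ Sum.inr) g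
  have hmass : c⁻¹ * ((v ∘ Sum.inl) ⬝ᵥ M₁ *ᵥ (v ∘ Sum.inl)) ≤ (2 * c)⁻¹ * (v ⬝ᵥ M *ᵥ v) :=
    calc c⁻¹ * ((v ∘ Sum.inl) ⬝ᵥ M₁ *ᵥ (v ∘ Sum.inl))
        = (2 * c)⁻¹ * (2 * ((v ∘ Sum.inl) ⬝ᵥ M₁ *ᵥ (v ∘ Sum.inl))) := by field_simp
      _ ≤ (2 * c)⁻¹ * (v ⬝ᵥ M *ᵥ v) := by gcongr
  rw [inv_one, one_mul, one_mul] at hg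
  linarith

theorem two_mul_dotProduct_sumElim_le_energy (hA : A.PosSemidef) (hM₁ : M₁.PosDef)
    (hB : B.PosDef) {c : ℝ} (hc : 0 < c) {v : ι₁ ⊕ ι₂ → ℝ}
    (hMdom : 2 * ((v ∘ Sum.inl) ⬝ᵥ M₁ *ᵥ (v ∘ Sum.inl)) ≤ v ⬝ᵥ M *ᵥ v)
    (hDdom : (v ∘ Sum.inr) ⬝ᵥ B *ᵥ (v ∘ Sum.inr) ≤ v ⬝ᵥ D *ᵥ v)
    (x : ι₁ ⊕ ι₂ → ℝ) (f : ι₁ → ℝ) (g : ι₂ → ℝ) :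
    2 * (v ⬝ᵥ Sum.elim f g) ≤
      c * (f ⬝ᵥ M₁⁻¹ *ᵥ f) + g ⬝ᵥ B⁻¹ *ᵥ g + (2 * c)⁻¹ * energy M A x v + v ⬝ᵥ D *ᵥ v := by
  have hkinetic : (2 * c)⁻¹ * (v ⬝ᵥ M *ᵥ v) ≤ (2 * c)⁻¹ * energy M A x v := by
    gcongr
    exact le_add_of_nonneg_right (dotProduct_mulVec_self_nonneg hA x)
  linarith [two_mul_dotProduct_sumElim_le hM₁ hB hc hMdom hDdom f g]

theorem poroelastic_blockwise_stability_general {T : ℝ} (hT : 0 < T)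
    (hM : M.IsHermitian) (hA : A.PosSemidef) (hM₁ : M₁.PosDef) (hB : B.PosDef)
    (hMdom : ∀ x : ι₁ ⊕ ι₂ → ℝ, 2 * ((x ∘ Sum.inl) ⬝ᵥ M₁ *ᵥ (x ∘ Sum.inl)) ≤ x ⬝ᵥ M *ᵥ x)
    (hDdom : ∀ x : ι₁ ⊕ ι₂ → ℝ, (x ∘ Sum.inr) ⬝ᵥ B *ᵥ (x ∘ Sum.inr) ≤ x ⬝ᵥ D *ᵥ x)
    {F : ℝ → ι₁ → ℝ} {G : ℝ → ι₂ → ℝ}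
    (hF : IntervalIntegrable (fun s => F s ⬝ᵥ M₁⁻¹ *ᵥ F s) volume 0 T)
    (hG : IntervalIntegrable (fun s => G s ⬝ᵥ B⁻¹ *ᵥ G s) volume 0 T)
    {X X' X'' : ℝ → ι₁ ⊕ ι₂ → ℝ}
    (hX : ∀ t ∈ Icc 0 T, HasDerivWithinAt X (X' t) (Icc 0 T) t)
    (hX' : ∀ t ∈ Icc 0 T, HasDerivWithinAt X' (X'' t) (Icc 0 T) t)
    (heq : ∀ t ∈ Icc 0 T, M *ᵥ X'' t + D *ᵥ X' t + A *ᵥ X t = Sum.elim (F t) (G t))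
    {t : ℝ} (ht : t ∈ Icc 0 T) :
    energy M A (X t) (X' t) + ∫ s in 0..t, X' s ⬝ᵥ D *ᵥ X' s ≤
      2 * (energy M A (X 0) (X' 0) + T * (∫ s in 0..T, F s ⬝ᵥ M₁⁻¹ *ᵥ F s)
        + ∫ s in 0..T, G s ⬝ᵥ B⁻¹ *ᵥ G s) := by
  have hMnonneg (x : ι₁ ⊕ ι₂ → ℝ) : 0 ≤ x ⬝ᵥ M *ᵥ x :=
    (mul_nonneg zero_le_two (dotProduct_mulVec_self_nonneg hM₁.posSemidef _)).trans (hMdom x)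
  have hDnonneg (x : ι₁ ⊕ ι₂ → ℝ) : 0 ≤ x ⬝ᵥ D *ᵥ x :=
    (dotProduct_mulVec_self_nonneg hB.posSemidef _).trans (hDdom x)
  have hE₀ (s : ℝ) : 0 ≤ energy M A (X s) (X' s) :=
    add_nonneg (hMnonneg _) (dotProduct_mulVec_self_nonneg hA _)
  have hE' (s : ℝ) (hs : s ∈ Icc 0 T) :=
    hasDerivWithinAt_energy hM hA.isHermitian (hX s hs) (hX' s hs) (heq s hs)
  have hd : IntervalIntegrable (fun s => X' s ⬝ᵥ D *ᵥ X' s) volume 0 T :=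
    intervalIntegrable_dotProduct_mulVec_self D hT.le fun s hs => (hX' s hs).continuousWithinAt
  have hload₀ (s : ℝ) : 0 ≤ T * (F s ⬝ᵥ M₁⁻¹ *ᵥ F s) + G s ⬝ᵥ B⁻¹ *ᵥ G s :=
    add_nonneg (mul_nonneg hT.le (dotProduct_mulVec_self_nonneg hM₁.inv.posSemidef _))
      (dotProduct_mulVec_self_nonneg hB.inv.posSemidef _)
  have hpower (s : ℝ) :=
    two_mul_dotProduct_sumElim_le_energy hA hM₁ hB hT (hMdom (X' s)) (hDdom _) (X s) (F s) (G s)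
  have hhalf : (2 * T)⁻¹ * (T - 0) = 1 / 2 := by field_simp; ring
  have h := one_sub_mul_add_integral_le_of_hasDerivWithinAt (c := (2 * T)⁻¹)
    (by positivity) (by linarith)
    (fun s hs => (hE' s hs).continuousWithinAt) (fun s _ => hE₀ s)
    (fun s hs => (hE' s (Ioo_subset_Icc_self hs)).mono_of_mem_nhdsWithin
      (Icc_mem_nhdsGT_of_mem (Ioo_subset_Ico_self hs)))
    hd (fun s _ => hDnonneg _) ((hF.const_mul T).add hG) (fun s _ => hload₀ s)
    (fun s _ => by linarith [hpower s]) ht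
  rw [hhalf, intervalIntegral.integral_add (hF.const_mul T) hG,
    intervalIntegral.integral_const_mul] at h
  linarith

end Block

/-- Blockwise stability estimate for the semi-discrete
poro-elastic(-acoustic) system. Vectors in `ℝⁿ`, `n = n₁ + n₂`, are indexed by
`Fin n₁ ⊕ Fin n₂`, `X = (X₁, X₂)` with `X₁ = X ∘ Sum.inl`, `X₂ = X ∘ Sum.inr`.
Assume `M` symmetric positive definite, `A` symmetric positive semidefinite,
`M₁, B` symmetric positive definite with `XᵀMX ≥ 2 X₁ᵀM₁X₁` and
`XᵀDX ≥ X₂ᵀBX₂`, `F, G` continuous, `S = (F,G)`, and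
`M X'' + D X' + A X = S` on `[0,T]`. Then, with
`E(t) = X'(t)ᵀM X'(t) + X(t)ᵀA X(t)`,
`max_{t∈[0,T]} [E(t) + ∫₀ᵗ X'ᵀD X' ds] ≤
  2[E(0) + T ∫₀ᵀ FᵀM₁⁻¹F ds + ∫₀ᵀ GᵀB⁻¹G ds]`. -/
theorem poroelastic_blockwise_stability
    (n₁ n₂ : ℕ) (hn₁ : 1 ≤ n₁) (hn₂ : 1 ≤ n₂)
    (T : ℝ) (hT : 0 < T)
    (M A D : Matrix (Fin n₁ ⊕ Fin n₂) (Fin n₁ ⊕ Fin n₂) ℝ)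
    (hM : M.PosDef) (hA : A.PosSemidef)
    (M₁ : Matrix (Fin n₁) (Fin n₁) ℝ) (B : Matrix (Fin n₂) (Fin n₂) ℝ)
    (hM₁ : M₁.PosDef) (hB : B.PosDef)
    (hMdom : ∀ x : Fin n₁ ⊕ Fin n₂ → ℝ,
      2 * ((x ∘ Sum.inl) ⬝ᵥ M₁.mulVec (x ∘ Sum.inl)) ≤ x ⬝ᵥ M.mulVec x)
    (hDdom : ∀ x : Fin n₁ ⊕ Fin n₂ → ℝ,
      (x ∘ Sum.inr) ⬝ᵥ B.mulVec (x ∘ Sum.inr) ≤ x ⬝ᵥ D.mulVec x)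
    (F : ℝ → Fin n₁ → ℝ) (G : ℝ → Fin n₂ → ℝ)
    (hF : ContinuousOn F (Set.Icc 0 T)) (hG : ContinuousOn G (Set.Icc 0 T))
    (X X' X'' : ℝ → Fin n₁ ⊕ Fin n₂ → ℝ)
    (hX : ∀ t ∈ Set.Icc (0 : ℝ) T, HasDerivWithinAt X (X' t) (Set.Icc 0 T) t)
    (hX' : ∀ t ∈ Set.Icc (0 : ℝ) T, HasDerivWithinAt X' (X'' t) (Set.Icc 0 T) t)
    (hX'' : ContinuousOn X'' (Set.Icc 0 T))
    (heq : ∀ t ∈ Set.Icc (0 : ℝ) T,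
      M.mulVec (X'' t) + D.mulVec (X' t) + A.mulVec (X t)
        = Sum.elim (F t) (G t)) :
    ∀ t ∈ Set.Icc (0 : ℝ) T,
      (X' t ⬝ᵥ M.mulVec (X' t) + X t ⬝ᵥ A.mulVec (X t))
          + (∫ s in (0 : ℝ)..t, X' s ⬝ᵥ D.mulVec (X' s))
        ≤ 2 * ((X' 0 ⬝ᵥ M.mulVec (X' 0) + X 0 ⬝ᵥ A.mulVec (X 0))
            + T * (∫ s in (0 : ℝ)..T, F s ⬝ᵥ M₁⁻¹.mulVec (F s))
            + ∫ s in (0 : ℝ)..T, G s ⬝ᵥ B⁻¹.mulVec (G s)) := by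
  intro t ht
  exact poroelastic_blockwise_stability_general hT hM.isHermitian hA hM₁ hB hMdom hDdom
    (intervalIntegrable_dotProduct_mulVec_self _ hT.le hF)
    (intervalIntegrable_dotProduct_mulVec_self _ hT.le hG) hX hX' heq ht
end
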